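/- For a fixed integer r ≥ 1 and complex s with Re(s) > 1, the double Dirichlet series D₁(s,r) = Σ_{m≥1} (μ(m)/(φ(m)·m^{r+1})) · Σ_{n≥1} c_m(n)/n^s equals (ζ(s)/ζ(s+r+1)) · Π_p (1 + (1/(p^{r+1}(p-1))) · (1 - p^{-s})/(1 - p^{-(s+r+1)})). -/

import Mathlib

open scoped Classical
open ArithmeticFunction

noncomputable def eC (x : ℂ) : ℂ := Complex.exp (2 * Real.pi * Complex.I * x)

/-- Ramanujan sum `c_m(n) = ∑_{b mod m, (b,m)=1} e(bn/m)`. -/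
noncomputable def ramanujanSum (m n : ℕ) : ℂ :=
  ∑ b ∈ (Finset.range m).filter (fun b => Nat.Coprime b m), eC ((b : ℂ) * n / m)

/-- Gauss sum `τ(χ) = ∑_{b mod m} χ(b) e(b/m)`. -/
noncomputable def gaussSum' {m : ℕ} (χ : DirichletCharacter ℂ m) : ℂ :=
  ∑ b ∈ Finset.range m, χ b * eC ((b : ℂ) / m)

/-- `c'_g(n) = ∑_{b mod m, (b,m)=1} g(b) e(bn/m)` for a weight `g`. -/
noncomputable def cCharF (m : ℕ) (g : ℕ → ℂ) (n : ℕ) : ℂ :=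
  ∑ b ∈ (Finset.range m).filter (fun b => Nat.Coprime b m), g b * eC ((b : ℂ) * n / m)

/-!
Möbius inversion of `∑_{d ∣ m} c_d(n) = m · [m ∣ n]` gives Kluyver's formula, which exhibits
`n ↦ c_m(n)` as the Dirichlet convolution of the constant function `1` with a function supported on
the divisors of `m`. Hence the inner series is `ζ(s) J_{1-s}(m)`, with Jordan's totient `J_z` of
complex order `z`. What remains of the `m`-th outer term is multiplicative in `m` and supported on
squarefree numbers, so the outer series, with `m ^ w` for `m ^ (r + 1)`, is the product of the
factors `1 + (1 - p^{1-s}) / ((p - 1) p^w)`; it converges absolutely because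
`(1 - p^{1-s}) / ((p - 1) p^w) = O(p^{-1 - Re w})`. Multiplying by the Euler product of `ζ(s + w)`
turns these factors into those of the asserted product.
-/

section RootsOfUnity

variable {R : Type*} [CommRing R] [IsDomain R]

lemma sum_nthRootsFinset_pow {m : ℕ} [NeZero m] {z : R} (hz : IsPrimitiveRoot z m) (n : ℕ) :
    ∑ x ∈ Polynomial.nthRootsFinset m (1 : R), x ^ n = if m ∣ n then (m : R) else 0 := by
  have sum_eq_geom :
      ∑ x ∈ Polynomial.nthRootsFinset m (1 : R), x ^ n = ∑ i ∈ Finset.range m, (z ^ n) ^ i := by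
    refine (Finset.sum_nbij (z ^ ·) (fun i _ ↦ ?_) (fun i hi j hj h ↦ ?_) (fun x hx ↦ ?_)
      fun i _ ↦ pow_right_comm z n i).symm
    · rw [Polynomial.mem_nthRootsFinset (NeZero.pos m), pow_right_comm, hz.pow_eq_one, one_pow]
    · exact hz.pow_inj (Finset.mem_range.1 hi) (Finset.mem_range.1 hj) h
    · obtain ⟨i, hi, rfl⟩ :=
        hz.eq_pow_of_pow_eq_one ((Polynomial.mem_nthRootsFinset (NeZero.pos m) _).1 hx)
      exact ⟨i, by simpa using hi, rfl⟩
  rw [sum_eq_geom]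
  split_ifs with h
  · simp [(hz.pow_eq_one_iff_dvd n).2 h]
  · have hne : z ^ n - 1 ≠ 0 := sub_ne_zero.2 fun h1 ↦ h ((hz.pow_eq_one_iff_dvd n).1 h1)
    refine eq_zero_of_ne_zero_of_mul_right_eq_zero hne ?_
    rw [geom_sum_mul, pow_right_comm, hz.pow_eq_one, one_pow, sub_self]

end RootsOfUnity

section RamanujanSum

lemma ramanujanSum_eq_sum_primitiveRoots {m : ℕ} (hm : m ≠ 0) (n : ℕ) :
    ramanujanSum m n = ∑ z ∈ primitiveRoots m ℂ, z ^ n := by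
  have hζ := Complex.isPrimitiveRoot_exp m hm
  have exp_eq_pow (b : ℕ) : Complex.exp (2 * Real.pi * Complex.I * ((b : ℂ) / m)) =
      Complex.exp (2 * Real.pi * Complex.I / m) ^ b := by
    rw [← Complex.exp_nat_mul]
    ring_nf
  refine Finset.sum_bij (fun b _ ↦ Complex.exp (2 * Real.pi * Complex.I * ((b : ℂ) / m)))
    (fun b hb ↦ ?_) (fun a ha b hb hab ↦ ?_) (fun z hz ↦ ?_) (fun b _ ↦ ?_)
  · rw [mem_primitiveRoots (Nat.pos_of_ne_zero hm)]
    exact Complex.isPrimitiveRoot_exp_of_coprime b m hm (Finset.mem_filter.1 hb).2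
  · rw [exp_eq_pow, exp_eq_pow] at hab
    simp only [Finset.mem_filter, Finset.mem_range] at ha hb
    exact hζ.pow_inj ha.1 hb.1 hab
  · rw [mem_primitiveRoots (Nat.pos_of_ne_zero hm), Complex.isPrimitiveRoot_iff _ _ hm] at hz
    obtain ⟨b, hb, hcop, rfl⟩ := hz
    exact ⟨b, Finset.mem_filter.2 ⟨Finset.mem_range.2 hb, hcop⟩, rfl⟩
  · rw [eC, ← Complex.exp_nat_mul]
    ring_nf

lemma sum_divisors_ramanujanSum {m : ℕ} (hm : m ≠ 0) (n : ℕ) :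
    ∑ d ∈ m.divisors, ramanujanSum d n = if m ∣ n then (m : ℂ) else 0 := by
  have : NeZero m := ⟨hm⟩
  rw [← sum_nthRootsFinset_pow (Complex.isPrimitiveRoot_exp m hm) n,
    IsPrimitiveRoot.nthRoots_one_eq_biUnion_primitiveRoots,
    Finset.sum_biUnion fun _ _ _ _ h ↦ IsPrimitiveRoot.disjoint h]
  exact Finset.sum_congr rfl fun d hd ↦
    ramanujanSum_eq_sum_primitiveRoots (Nat.pos_of_mem_divisors hd).ne' n

/-- The coefficients `d ↦ μ(m/d) d`, supported on the divisors of `m`, of Kluyver's formula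
`c_m(n) = ∑_{d ∣ gcd(m, n)} μ(m/d) d`. -/
noncomputable def kluyverCoeff (m : ℕ) : ArithmeticFunction ℂ :=
  ⟨fun d ↦ if d ∈ m.divisors then (moebius (m / d) : ℂ) * d else 0, by simp⟩

lemma kluyverCoeff_apply (m d : ℕ) :
    kluyverCoeff m d = if d ∈ m.divisors then (moebius (m / d) : ℂ) * d else 0 := rfl

lemma ramanujanSum_eq_zeta_mul_kluyverCoeff {m n : ℕ} (hm : m ≠ 0) (hn : n ≠ 0) :
    ramanujanSum m n = ((zeta : ArithmeticFunction ℂ) * kluyverCoeff m) n := by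
  have moebius_inversion := (sum_eq_iff_sum_mul_moebius_eq (f := (ramanujanSum · n))
    (g := fun d ↦ if d ∣ n then (d : ℂ) else 0)).1
    (fun d hd ↦ sum_divisors_ramanujanSum hd.ne' n) m (Nat.pos_of_ne_zero hm)
  calc ramanujanSum m n
      = ∑ d ∈ m.divisors, (moebius (m / d) : ℂ) * if d ∣ n then (d : ℂ) else 0 := by
        rw [← moebius_inversion, Nat.sum_divisorsAntidiagonal'
          (f := fun a b ↦ (moebius a : ℂ) * if b ∣ n then (b : ℂ) else 0)]
    _ = ∑ d ∈ n.divisors, kluyverCoeff m d := by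
        simp only [kluyverCoeff_apply, mul_ite, mul_zero, ← Finset.sum_filter]
        refine Finset.sum_congr ?_ fun _ _ ↦ rfl
        ext d
        simp [hm, hn, and_comm]
    _ = ((zeta : ArithmeticFunction ℂ) * kluyverCoeff m) n := coe_zeta_mul_apply.symm

end RamanujanSum

section JordanTotient

/-- The power function `n ↦ n ^ z` with a complex exponent as an arithmetic function. The value at
`0` is set to `0`, whereas `(0 : ℂ) ^ (0 : ℂ) = 1`. -/
noncomputable def natCpow (z : ℂ) : ArithmeticFunction ℂ :=
  ⟨fun n ↦ if n = 0 then 0 else (n : ℂ) ^ z, if_pos rfl⟩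

lemma natCpow_apply {n : ℕ} (hn : n ≠ 0) (z : ℂ) : natCpow z n = (n : ℂ) ^ z := if_neg hn

lemma isMultiplicative_natCpow (z : ℂ) : (natCpow z).IsMultiplicative := by
  refine IsMultiplicative.iff_ne_zero.2 ⟨by simp [natCpow_apply], fun {m n} hm hn _ ↦ ?_⟩
  rw [natCpow_apply (mul_ne_zero hm hn), natCpow_apply hm, natCpow_apply hn, Nat.cast_mul,
    Complex.natCast_mul_natCast_cpow]

/-- Jordan's totient function `J_z(n) = ∑_{d ∣ n} μ(n/d) d^z` of complex order `z`, which describes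
the Dirichlet series of the Ramanujan sums. -/
noncomputable def jordanTotient (z : ℂ) : ArithmeticFunction ℂ :=
  (moebius : ArithmeticFunction ℂ) * natCpow z

lemma isMultiplicative_jordanTotient (z : ℂ) : (jordanTotient z).IsMultiplicative :=
  isMultiplicative_moebius.intCast.mul (isMultiplicative_natCpow z)

lemma jordanTotient_apply (z : ℂ) (n : ℕ) :
    jordanTotient z n = ∑ d ∈ n.divisors, (moebius (n / d) : ℂ) * (d : ℂ) ^ z := by
  rw [jordanTotient, ArithmeticFunction.mul_apply, Nat.sum_divisorsAntidiagonal'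
    (f := fun a b ↦ (moebius : ArithmeticFunction ℂ) a * natCpow z b)]
  refine Finset.sum_congr rfl fun d hd ↦ ?_
  rw [natCpow_apply (Nat.pos_of_mem_divisors hd).ne', intCoe_apply]

lemma jordanTotient_apply_prime (z : ℂ) {p : ℕ} (hp : p.Prime) :
    jordanTotient z p = (p : ℂ) ^ z - 1 := by
  rw [jordanTotient_apply, hp.sum_divisors]
  simp [Nat.div_self hp.pos, moebius_apply_prime hp, sub_eq_add_neg]

lemma LSeriesHasSum_kluyverCoeff (m : ℕ) (s : ℂ) :
    LSeriesHasSum (kluyverCoeff m) s (jordanTotient (1 - s) m) := by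
  have term_eq {d : ℕ} (hd : d ∈ m.divisors) :
      LSeries.term (kluyverCoeff m) s d = (moebius (m / d) : ℂ) * (d : ℂ) ^ (1 - s) := by
    have hd0 : d ≠ 0 := (Nat.pos_of_mem_divisors hd).ne'
    rw [LSeries.term_of_ne_zero hd0, kluyverCoeff_apply, if_pos hd,
      Complex.cpow_sub _ _ (Nat.cast_ne_zero.2 hd0), Complex.cpow_one, mul_div_assoc]
  rw [jordanTotient_apply, ← Finset.sum_congr rfl fun d hd ↦ term_eq hd]
  refine hasSum_sum_of_ne_finset_zero fun d hd ↦ ?_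
  simp [LSeries.term_def, kluyverCoeff_apply, hd]

lemma LSeriesHasSum_ramanujanSum {m : ℕ} (hm : m ≠ 0) {s : ℂ} (hs : 1 < s.re) :
    LSeriesHasSum (ramanujanSum m) s (riemannZeta s * jordanTotient (1 - s) m) := by
  rw [LSeriesHasSum_congr s _ fun hn ↦ ramanujanSum_eq_zeta_mul_kluyverCoeff hm hn]
  exact LSeriesHasSum_mul (LSeriesHasSum_zeta hs) (LSeriesHasSum_kluyverCoeff m s)

lemma tsum_ramanujanSum_div_cpow {m : ℕ} (hm : m ≠ 0) {s : ℂ} (hs : 1 < s.re) :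
    ∑' n : ℕ, ramanujanSum m (n + 1) / ((n + 1 : ℕ) : ℂ) ^ s =
      riemannZeta s * jordanTotient (1 - s) m := by
  have hsum := LSeriesHasSum_ramanujanSum hm hs
  rw [← hsum.LSeries_eq, LSeries, hsum.summable.tsum_eq_zero_add, LSeries.term_zero, zero_add]
  exact tsum_congr fun n ↦ (LSeries.term_of_ne_zero n.succ_ne_zero _ _).symm

end JordanTotient

section EulerProduct

variable {R : Type*} [NormedCommRing R] [NormOneClass R] {f : ArithmeticFunction R}

lemma summable_norm_of_squarefree_support (hf : f.IsMultiplicative)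
    (hsupp : ∀ n, ¬Squarefree n → f n = 0) (hsum : Summable fun p : Nat.Primes ↦ ‖f p‖) :
    Summable (‖f ·‖) := by
  let g : ℕ → ℝ := Set.indicator {p | p.Prime} (‖f ·‖)
  have g_nonneg (p : ℕ) : 0 ≤ g p := Set.indicator_nonneg (fun _ _ ↦ norm_nonneg _) p
  have summable_prod : Summable fun S : Finset ℕ ↦ ∏ p ∈ S, g p :=
    summable_finsetProd_of_summable_nonneg g_nonneg (summable_subtype_iff_indicator.1 hsum)
  have primeFactors_injective :
      Function.Injective fun n : {n : ℕ | Squarefree n} ↦ n.1.primeFactors := fun m n h ↦ by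
    rw [Subtype.ext_iff, ← Nat.prod_primeFactors_of_squarefree m.2,
      ← Nat.prod_primeFactors_of_squarefree n.2]
    exact congrArg (fun S ↦ ∏ p ∈ S, p) h
  have norm_le (n : {n : ℕ | Squarefree n}) : ‖f n‖ ≤ ∏ p ∈ n.1.primeFactors, g p :=
    calc ‖f n‖ = ‖∏ p ∈ n.1.primeFactors, f p‖ := by rw [hf.prod_primeFactors n.2]
      _ ≤ ∏ p ∈ n.1.primeFactors, ‖f p‖ := Finset.norm_prod_le _ _
      _ = ∏ p ∈ n.1.primeFactors, g p := Finset.prod_congr rfl fun p hp ↦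
        (Set.indicator_of_mem (s := {p : ℕ | p.Prime}) (Nat.prime_of_mem_primeFactors hp)
          (‖f ·‖)).symm
  have support_subset : Function.support (‖f ·‖) ⊆ {n | Squarefree n} := fun n hn ↦ by
    by_contra h
    exact hn (by simp [hsupp n h])
  rw [← Set.indicator_eq_self.2 support_subset, ← summable_subtype_iff_indicator]
  exact (summable_prod.comp_injective primeFactors_injective).of_nonneg_of_le
    (fun _ ↦ norm_nonneg _) norm_le

lemma hasProd_one_add_of_squarefree_support [CompleteSpace R] (hf : f.IsMultiplicative)
    (hsupp : ∀ n, ¬Squarefree n → f n = 0) (hsum : Summable fun p : Nat.Primes ↦ ‖f p‖) :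
    HasProd (fun p : Nat.Primes ↦ 1 + f p) (∑' n, f n) := by
  have tsum_prime_pow (p : Nat.Primes) : ∑' e, f (p ^ e) = 1 + f p := by
    have eq_zero (e : ℕ) (he : e ∉ Finset.range 2) : f (p ^ e) = 0 := by
      rw [Finset.mem_range, not_lt] at he
      refine hsupp _ fun hsq ↦ ?_
      have := ((Nat.squarefree_pow_iff p.2.ne_one (by lia)).1 hsq).2
      lia
    simp [tsum_eq_sum eq_zero, Finset.sum_range_succ, hf.map_one]
  simpa only [tsum_prime_pow] using
    hf.eulerProduct_hasProd (summable_norm_of_squarefree_support hf hsupp hsum)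

end EulerProduct

section OuterSeries

/-- The coefficients `μ(m) J_z(m) / (φ(m) m^w)`: for `z = 1 - s` these are, up to the factor `ζ(s)`,
the terms of the outer series once its inner Dirichlet series has been summed. -/
noncomputable def outerCoeff (z w : ℂ) : ArithmeticFunction ℂ :=
  ⟨fun m ↦ (moebius m : ℂ) / ((Nat.totient m : ℂ) * (m : ℂ) ^ w) * jordanTotient z m, by simp⟩

lemma outerCoeff_apply (z w : ℂ) (m : ℕ) : outerCoeff z w m =
    (moebius m : ℂ) / ((Nat.totient m : ℂ) * (m : ℂ) ^ w) * jordanTotient z m := rfl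

lemma isMultiplicative_outerCoeff (z w : ℂ) : (outerCoeff z w).IsMultiplicative := by
  refine ⟨by simp [outerCoeff_apply, (isMultiplicative_jordanTotient z).map_one],
    fun {m n} hmn ↦ ?_⟩
  simp only [outerCoeff_apply, isMultiplicative_moebius.map_mul_of_coprime hmn,
    Nat.totient_mul hmn, (isMultiplicative_jordanTotient z).map_mul_of_coprime hmn, Nat.cast_mul,
    Complex.natCast_mul_natCast_cpow, Int.cast_mul]
  ring

lemma outerCoeff_eq_zero_of_not_squarefree (z w : ℂ) {m : ℕ} (hm : ¬Squarefree m) :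
    outerCoeff z w m = 0 := by
  simp [outerCoeff_apply, moebius_eq_zero_of_not_squarefree hm]

lemma outerCoeff_apply_prime (z w : ℂ) {p : ℕ} (hp : p.Prime) :
    outerCoeff z w p = (1 - (p : ℂ) ^ z) / (((p : ℂ) - 1) * (p : ℂ) ^ w) := by
  rw [outerCoeff_apply, jordanTotient_apply_prime z hp, moebius_apply_prime hp,
    Nat.totient_prime hp, Nat.cast_sub hp.one_le]
  push_cast
  ring

lemma norm_outerCoeff_prime_le {z : ℂ} (hz : z.re ≤ 0) (w : ℂ) {p : ℕ} (hp : p.Prime) :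
    ‖outerCoeff z w p‖ ≤ 4 * (p : ℝ) ^ (-1 - w.re) := by
  have two_le : (2 : ℝ) ≤ p := mod_cast hp.two_le
  have p_pos : (0 : ℝ) < p := mod_cast hp.pos
  have norm_numerator_le : ‖1 - (p : ℂ) ^ z‖ ≤ 2 := by
    have : ‖(p : ℂ) ^ z‖ ≤ 1 := by
      rw [Complex.norm_natCast_cpow_of_pos hp.pos]
      exact Real.rpow_le_one_of_one_le_of_nonpos (by linarith) hz
    linarith [norm_sub_le (1 : ℂ) ((p : ℂ) ^ z), norm_one (α := ℂ)]
  have le_norm_sub_one : (p : ℝ) / 2 ≤ ‖(p : ℂ) - 1‖ := by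
    have := norm_sub_norm_le (p : ℂ) 1
    rw [Complex.norm_natCast, norm_one] at this
    linarith
  rw [outerCoeff_apply_prime z w hp, norm_div, norm_mul, Complex.norm_natCast_cpow_of_pos hp.pos w]
  calc ‖1 - (p : ℂ) ^ z‖ / (‖(p : ℂ) - 1‖ * (p : ℝ) ^ w.re)
      ≤ 2 / ((p : ℝ) / 2 * (p : ℝ) ^ w.re) := by gcongr
    _ = 4 * (p : ℝ) ^ (-1 - w.re) := by
        rw [Real.rpow_sub p_pos, Real.rpow_neg_one]
        field_simp
        norm_num

variable {z s w : ℂ}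

lemma summable_norm_outerCoeff_primes (hz : z.re ≤ 0) (hw : 0 < w.re) :
    Summable fun p : Nat.Primes ↦ ‖outerCoeff z w p‖ :=
  ((Nat.Primes.summable_rpow.2 (by linarith : -1 - w.re < -1)).mul_left 4).of_nonneg_of_le
    (fun _ ↦ norm_nonneg _) fun p ↦ norm_outerCoeff_prime_le hz w p.2

lemma summable_outerCoeff (hz : z.re ≤ 0) (hw : 0 < w.re) : Summable (outerCoeff z w) :=
  (summable_norm_of_squarefree_support (isMultiplicative_outerCoeff z w)
    (fun _ ↦ outerCoeff_eq_zero_of_not_squarefree z w)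
    (summable_norm_outerCoeff_primes hz hw)).of_norm

lemma hasProd_one_add_outerCoeff (hz : z.re ≤ 0) (hw : 0 < w.re) :
    HasProd (fun p : Nat.Primes ↦ 1 + outerCoeff z w p) (∑' m, outerCoeff z w m) :=
  hasProd_one_add_of_squarefree_support (isMultiplicative_outerCoeff z w)
    (fun _ ↦ outerCoeff_eq_zero_of_not_squarefree z w) (summable_norm_outerCoeff_primes hz hw)

lemma one_add_outerCoeff_prime_mul_inv (hsw : 1 < (s + w).re) {p : ℕ} (hp : p.Prime) :
    (1 + outerCoeff (1 - s) w p) * (1 - (p : ℂ) ^ (-(s + w)))⁻¹ =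
      1 + 1 / ((p : ℂ) ^ w * ((p : ℂ) - 1)) *
        ((1 - (p : ℂ) ^ (-s)) / (1 - (p : ℂ) ^ (-(s + w)))) := by
  have hp0 : (p : ℂ) ≠ 0 := Nat.cast_ne_zero.2 hp.ne_zero
  have hp1 : (p : ℂ) - 1 ≠ 0 := sub_ne_zero.2 (Nat.cast_ne_one.2 hp.ne_one)
  have hpw : (p : ℂ) ^ w ≠ 0 := by simp [Complex.cpow_eq_zero_iff, hp0]
  have hD : 1 - (p : ℂ) ^ (-(s + w)) ≠ 0 := Complex.one_sub_prime_cpow_ne_zero hp hsw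
  have cpow_one_sub : (p : ℂ) ^ (1 - s) = p * (p : ℂ) ^ (-s) := by
    rw [sub_eq_add_neg, Complex.cpow_add _ _ hp0, Complex.cpow_one]
  have cpow_neg_add : (p : ℂ) ^ (-(s + w)) = (p : ℂ) ^ (-s) / (p : ℂ) ^ w := by
    rw [neg_add', Complex.cpow_sub _ _ hp0]
  have numerator_eq : 1 + outerCoeff (1 - s) w p =
      (1 - (p : ℂ) ^ (-(s + w))) + 1 / ((p : ℂ) ^ w * ((p : ℂ) - 1)) * (1 - (p : ℂ) ^ (-s)) := by
    rw [outerCoeff_apply_prime _ _ hp, cpow_one_sub, cpow_neg_add]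
    field_simp
    ring
  rw [numerator_eq, add_mul, mul_inv_cancel₀ hD, mul_assoc, ← div_eq_mul_inv]

lemma hasProd_tsum_outerCoeff_mul_riemannZeta (hs : 1 < s.re) (hw : 0 < w.re) :
    HasProd (fun p : Nat.Primes ↦ 1 + 1 / ((p : ℂ) ^ w * ((p : ℂ) - 1)) *
        ((1 - (p : ℂ) ^ (-s)) / (1 - (p : ℂ) ^ (-(s + w)))))
      ((∑' m, outerCoeff (1 - s) w m) * riemannZeta (s + w)) := by
  have hsw : 1 < (s + w).re := by rw [Complex.add_re]; linarith
  have hz : (1 - s).re ≤ 0 := by rw [Complex.sub_re, Complex.one_re]; linarith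
  simpa only [fun p : Nat.Primes ↦ one_add_outerCoeff_prime_mul_inv hsw p.2] using
    (hasProd_one_add_outerCoeff hz hw).mul (riemannZeta_eulerProduct_hasProd hsw)

end OuterSeries

theorem stmt3_general {s w : ℂ} (hs : 1 < s.re) (hw : 0 < w.re) :
    HasSum (fun m : ℕ ↦
        (moebius (m + 1) : ℂ) / ((Nat.totient (m + 1) : ℂ) * ((m + 1 : ℕ) : ℂ) ^ w) *
          ∑' n : ℕ, ramanujanSum (m + 1) (n + 1) / ((n + 1 : ℕ) : ℂ) ^ s)
      (riemannZeta s / riemannZeta (s + w) *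
        ∏' p : Nat.Primes, (1 + 1 / ((p : ℂ) ^ w * ((p : ℂ) - 1)) *
          ((1 - (p : ℂ) ^ (-s)) / (1 - (p : ℂ) ^ (-(s + w)))))) := by
  have hζ : riemannZeta (s + w) ≠ 0 :=
    riemannZeta_ne_zero_of_one_lt_re (by rw [Complex.add_re]; linarith)
  have hz : (1 - s).re ≤ 0 := by rw [Complex.sub_re, Complex.one_re]; linarith
  have hsum : HasSum (fun m ↦ outerCoeff (1 - s) w (m + 1)) (∑' m, outerCoeff (1 - s) w m) := by
    simpa using (hasSum_nat_add_iff' 1).2 (summable_outerCoeff hz hw).hasSum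
  rw [(hasProd_tsum_outerCoeff_mul_riemannZeta hs hw).tprod_eq, div_mul_eq_mul_div, mul_div_assoc,
    mul_div_cancel_right₀ _ hζ]
  refine (hsum.mul_left (riemannZeta s)).congr_fun fun m ↦ ?_
  rw [tsum_ramanujanSum_div_cpow m.succ_ne_zero hs, outerCoeff_apply]
  ring

theorem stmt3 (r : ℕ) (hr : 1 ≤ r) (s : ℂ) (hs : 1 < s.re) :
    (∑' m : ℕ, ((moebius (m + 1) : ℤ) / ((Nat.totient (m + 1) : ℂ) * ((m + 1 : ℕ) : ℂ) ^ (r + 1))) *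
        ∑' n : ℕ, ramanujanSum (m + 1) (n + 1) / ((n + 1 : ℕ) : ℂ) ^ s) =
      riemannZeta s / riemannZeta (s + (r : ℂ) + 1) *
        ∏' p : Nat.Primes,
          (1 + (1 / ((p : ℂ) ^ (r + 1) * ((p : ℂ) - 1))) *
            ((1 - (p : ℂ) ^ (-s)) / (1 - (p : ℂ) ^ (-(s + (r : ℂ) + 1))))) := by
  have hw : 0 < ((r : ℂ) + 1).re := by
    rw [Complex.add_re, Complex.natCast_re, Complex.one_re]
    positivity
  simpa only [← Nat.cast_add_one, Complex.cpow_natCast, add_assoc] using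
    (stmt3_general hs hw).tsum_eq
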